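/- (Legendre condition, unconstrained case.) Let 0 < α ≤ 1 and β > 0, and let φ : ℝⁿ×ℝⁿ → ℝ and L : ℝⁿ×ℝⁿ×[a,b] → ℝ be of class C². For (u',y') ∈ L^∞([a,b],ℝⁿ)×ℝⁿ set x(t,u',y') := y' + ∫_a^t ((t−s)^{α−1}/Γ(α)) u'(s) ds and 𝓛(u',y') := φ(y', x(b,u',y')) + ∫_a^b ((b−s)^{β−1}/Γ(β)) L( x(s,u',y'), u'(s), s ) ds. Suppose (u,y) ∈ L^∞([a,b],ℝⁿ)×ℝⁿ satisfies 𝓛(u,y) ≤ 𝓛(u',y') for all (u',y') ∈ L^∞([a,b],ℝⁿ)×ℝⁿ, and write x := x(·,u,y). Then for almost every t ∈ [a,b], the matrix ((b−t)^{β−1}/Γ(β)) ∂²₂₂L(x(t),u(t),t) is positive semidefinite, i.e. vᵀ ((b−t)^{β−1}/Γ(β)) ∂²₂₂L(x(t),u(t),t) v ≥ 0 for all v ∈ ℝⁿ. -/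

import Mathlib

open MeasureTheory Set
open scoped RealInnerProductSpace

/-- The trajectory `x(·,u,y)` associated with a Caputo fractional derivative `u`
of order `α` and initial condition `y`. -/
noncomputable def traj (n : ℕ) (a α : ℝ) (u : ℝ → EuclideanSpace ℝ (Fin n))
    (y : EuclideanSpace ℝ (Fin n)) (t : ℝ) : EuclideanSpace ℝ (Fin n) :=
  y + ∫ s in a..t, ((t - s) ^ (α - 1) / Real.Gamma α) • u s

/-- The Bolza functional. -/
noncomputable def bolza (n : ℕ) (a b α β : ℝ)
    (φ : EuclideanSpace ℝ (Fin n) × EuclideanSpace ℝ (Fin n) → ℝ)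
    (L : EuclideanSpace ℝ (Fin n) × EuclideanSpace ℝ (Fin n) × ℝ → ℝ)
    (u : ℝ → EuclideanSpace ℝ (Fin n)) (y : EuclideanSpace ℝ (Fin n)) : ℝ :=
  φ (y, traj n a α u y b) +
    ∫ s in a..b, ((b - s) ^ (β - 1) / Real.Gamma β) * L (traj n a α u y s, u s, s)

/-- Membership in `L^∞([a,b],ℝⁿ)` (a measurable, essentially bounded representative). -/
def admissible (n : ℕ) (a b : ℝ) (u : ℝ → EuclideanSpace ℝ (Fin n)) : Prop :=
  Measurable u ∧ ∃ C : ℝ, ∀ᵐ s ∂(volume : Measure ℝ), s ∈ Icc a b → ‖u s‖ ≤ C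

open MeasureTheory Set Filter Topology
open scoped RealInnerProductSpace

noncomputable def radem (k : ℕ) (t : ℝ) : ℝ :=
  if Even ⌊((k : ℝ) + 1) * t⌋ then 1 else -1

lemma radem_meas (k : ℕ) : Measurable (radem k) := by
  unfold radem
  refine Measurable.ite ?_ measurable_const measurable_const
  have : Measurable (fun t : ℝ => ⌊((k : ℝ) + 1) * t⌋) := by fun_prop
  exact this (MeasurableSet.of_discrete (s := {n : ℤ | Even n}))

lemma radem_cases (k : ℕ) (t : ℝ) : radem k t = 1 ∨ radem k t = -1 := by
  unfold radem; split_ifs <;> simp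

lemma radem_abs (k : ℕ) (t : ℝ) : ‖radem k t‖ ≤ 1 := by
  rcases radem_cases k t with h | h <;> simp [h]

lemma radem_shift (k : ℕ) (t : ℝ) : radem k (t + 1 / ((k : ℝ) + 1)) = - radem k t := by
  have h : ((k : ℝ) + 1) * (t + 1 / ((k : ℝ) + 1)) = ((k : ℝ) + 1) * t + 1 := by
    have : (k : ℝ) + 1 ≠ 0 := by positivity
    field_simp
  unfold radem
  rw [h, Int.floor_add_one]
  by_cases h2 : Even ⌊((k : ℝ) + 1) * t⌋
  · simp [h2]
  · simp [h2]

lemma radem_mul_int (k : ℕ) {f : ℝ → ℝ} {μ : Measure ℝ} (hf : Integrable f μ) :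
    Integrable (fun t => radem k t * f t) μ :=
  hf.bdd_mul (radem_meas k).aestronglyMeasurable (Eventually.of_forall (radem_abs k))

lemma radem_cont {f : ℝ → ℝ} (hf : Continuous f) (hc : HasCompactSupport f) :
    Tendsto (fun k => ∫ t, radem k t * f t) atTop (𝓝 0) := by
  have hfi : Integrable f := hf.integrable_of_hasCompactSupport hc
  obtain ⟨R, hR⟩ := hc.isCompact.isBounded.subset_closedBall (0 : ℝ)
  obtain ⟨M, hM⟩ := hf.bounded_above_of_compact_support hc
  have key : ∀ k : ℕ, ∫ t, radem k t * f t =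
      ∫ t, (1 / 2) * (radem k t * (f t - f (t + 1 / ((k : ℝ) + 1)))) := by
    intro k
    have h1 := integral_add_right_eq_self (μ := volume) (fun t => radem k t * f t) (1 / ((k : ℝ) + 1))
    simp only [radem_shift] at h1
    have hi := radem_mul_int k hfi
    have hi2 := radem_mul_int k (hfi.comp_add_right (1 / ((k : ℝ) + 1)))
    rw [integral_const_mul]
    simp only [mul_sub]
    rw [integral_sub hi hi2]
    simp only [neg_mul, integral_neg] at h1
    linarith
  simp only [key]
  have hlim : Tendsto (fun k : ℕ => 1 / ((k : ℝ) + 1)) atTop (𝓝 0) :=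
    tendsto_one_div_add_atTop_nhds_zero_nat
  rw [← integral_zero ℝ ℝ (μ := volume)]
  refine tendsto_integral_of_dominated_convergence
    (fun t => (Metric.closedBall (0 : ℝ) (R + 1)).indicator (fun _ => M) t) ?_ ?_ ?_ ?_
  · intro k
    have := radem_meas k
    have := hf.measurable
    exact Measurable.aestronglyMeasurable (by fun_prop)
  · rw [integrable_indicator_iff measurableSet_closedBall]
    exact integrableOn_const (by exact measure_closedBall_lt_top.ne)
  · intro k
    refine Eventually.of_forall fun t => ?_
    have hM0 : 0 ≤ M := (norm_nonneg _).trans (hM 0)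
    have hk0 : 0 ≤ 1 / ((k : ℝ) + 1) := by positivity
    have hk1 : 1 / ((k : ℝ) + 1) ≤ 1 := by
      rw [div_le_one (by positivity)]; linarith [(Nat.cast_nonneg k : (0 : ℝ) ≤ k)]
    by_cases ht : t ∈ Metric.closedBall (0 : ℝ) (R + 1)
    · rw [indicator_of_mem ht, norm_mul, norm_mul]
      have := radem_abs k t
      have h2 := norm_sub_le (f t) (f (t + 1 / ((k : ℝ) + 1)))
      have h3 := hM t
      have h4 := hM (t + 1 / ((k : ℝ) + 1))
      have h5 : ‖radem k t‖ * ‖f t - f (t + 1 / ((k : ℝ) + 1))‖ ≤ 1 * (M + M) := by gcongr; linarith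
      have h6 : ‖(1 / 2 : ℝ)‖ = 1 / 2 := by norm_num
      rw [h6]; linarith
    · rw [indicator_of_notMem ht]
      simp only [Metric.mem_closedBall, dist_zero_right, Real.norm_eq_abs, not_le] at ht
      have z : ∀ r, R < |r| → f r = 0 := by
        intro r hr
        by_contra h
        have := hR (subset_tsupport f h)
        simp at this
        linarith
      have e1 : f t = 0 := z t (by linarith)
      have e2 : f (t + 1 / ((k : ℝ) + 1)) = 0 := by
        apply z
        have := abs_sub_abs_le_abs_sub t (-(1 / ((k : ℝ) + 1)))
        rw [abs_neg, abs_of_nonneg hk0, sub_neg_eq_add] at this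
        linarith
      simp only [one_div] at e2 ⊢
      simp [e1, e2]
  · refine Eventually.of_forall fun t => ?_
    have h1 : Tendsto (fun k : ℕ => f (t + 1 / ((k : ℝ) + 1))) atTop (𝓝 (f t)) := by
      have := (hf.tendsto (t + 0)).comp (hlim.const_add t)
      simpa [Function.comp_def] using this
    refine squeeze_zero_norm (a := fun k : ℕ => ‖f t - f (t + 1 / ((k : ℝ) + 1))‖) ?_ ?_
    · intro k
      rw [norm_mul, norm_mul]
      have h6 : ‖(1 / 2 : ℝ)‖ = 1 / 2 := by norm_num
      rw [h6]
      have h7 : ‖radem k t‖ * ‖f t - f (t + 1 / ((k : ℝ) + 1))‖ ≤ 1 * ‖f t - f (t + 1 / ((k : ℝ) + 1))‖ := by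
        gcongr; exact radem_abs k t
      have := norm_nonneg (f t - f (t + 1 / ((k : ℝ) + 1)))
      linarith
    · simpa using (h1.const_sub (f t)).norm

lemma radem_L1 {f : ℝ → ℝ} (hf : Integrable f) :
    Tendsto (fun k => ∫ t, radem k t * f t) atTop (𝓝 0) := by
  rw [Metric.tendsto_atTop]
  intro ε hε
  obtain ⟨g, hgc, hg, hgcont, hgi⟩ := hf.exists_hasCompactSupport_integral_sub_le (half_pos hε)
  obtain ⟨N, hN⟩ := Metric.tendsto_atTop.1 (radem_cont hgcont hgc) (ε / 2) (half_pos hε)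
  refine ⟨N, fun k hk => ?_⟩
  have h1 := hN k hk
  rw [dist_zero_right] at h1 ⊢
  have h2 : ∫ t, radem k t * f t = (∫ t, radem k t * g t) + ∫ t, radem k t * (f t - g t) := by
    have h0 : Integrable (fun t => radem k t * (f t - g t)) := radem_mul_int k (hf.sub hgi)
    rw [← integral_add (radem_mul_int k hgi) h0]
    congr 1; ext t; ring
  have h3 : ‖∫ t, radem k t * (f t - g t)‖ ≤ ∫ t, ‖f t - g t‖ := by
    refine norm_integral_le_of_norm_le (hf.sub hgi).norm (Eventually.of_forall fun t => ?_)
    rw [norm_mul]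
    have := mul_le_mul_of_nonneg_right (radem_abs k t) (norm_nonneg (f t - g t))
    linarith
  rw [h2]
  have := norm_add_le (∫ t, radem k t * g t) (∫ t, radem k t * (f t - g t))
  linarith

lemma radem_L1_on {f : ℝ → ℝ} {S : Set ℝ} (hS : MeasurableSet S) (hf : IntegrableOn f S) :
    Tendsto (fun k => ∫ t in S, radem k t * f t) atTop (𝓝 0) := by
  have := radem_L1 ((integrable_indicator_iff hS).2 hf)
  refine this.congr fun k => ?_
  rw [← integral_indicator hS]
  congr 1; ext t
  by_cases h : t ∈ S <;> simp [h]

lemma radem_dom {F : ℕ → ℝ → ℝ} {f g : ℝ → ℝ} {S : Set ℝ} (hS : MeasurableSet S)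
    (hF : ∀ k, AEStronglyMeasurable (F k) (volume.restrict S)) (hg : IntegrableOn g S)
    (hb : ∀ k, ∀ᵐ t ∂(volume.restrict S), ‖F k t‖ ≤ g t)
    (hl : ∀ᵐ t ∂(volume.restrict S), Tendsto (fun k => F k t) atTop (𝓝 (f t))) :
    Tendsto (fun k => ∫ t in S, radem k t * F k t) atTop (𝓝 0) := by
  have hfm : AEStronglyMeasurable f (volume.restrict S) := aestronglyMeasurable_of_tendsto_ae _ hF hl
  have hfb : ∀ᵐ t ∂(volume.restrict S), ‖f t‖ ≤ g t := by
    filter_upwards [hl, ae_all_iff.2 hb] with t h1 h2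
    exact le_of_tendsto h1.norm (Eventually.of_forall h2)
  have hfi : IntegrableOn f S := hg.mono' hfm hfb
  have hFi : ∀ k, IntegrableOn (F k) S := fun k => hg.mono' (hF k) (hb k)
  have h1 : Tendsto (fun k => ∫ t in S, radem k t * (F k t - f t)) atTop (𝓝 0) := by
    rw [← integral_zero ℝ ℝ (μ := volume.restrict S)]
    refine tendsto_integral_of_dominated_convergence (fun t => g t + g t) ?_ (hg.add hg) ?_ ?_
    · intro k
      exact (radem_meas k).aestronglyMeasurable.mul ((hF k).sub hfm)
    · intro k
      filter_upwards [hb k, hfb] with t h1 h2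
      rw [norm_mul]
      have := mul_le_mul_of_nonneg_right (radem_abs k t) (norm_nonneg (F k t - f t))
      have := norm_sub_le (F k t) (f t)
      linarith
    · filter_upwards [hl] with t ht
      refine squeeze_zero_norm (a := fun k => ‖F k t - f t‖) ?_ ?_
      · intro k
        rw [norm_mul]
        have := mul_le_mul_of_nonneg_right (radem_abs k t) (norm_nonneg (F k t - f t))
        linarith
      · simpa using (ht.sub_const (f t)).norm
  have h2 := h1.add (radem_L1_on hS hfi)
  rw [add_zero] at h2
  refine h2.congr fun k => ?_
  have h0 : Integrable (fun t => radem k t * (F k t - f t)) (volume.restrict S) :=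
    radem_mul_int k ((hFi k).sub hfi)
  rw [← integral_add h0 (radem_mul_int k hfi)]
  congr 1; ext t; ring

lemma second_diff {E : Type*} [NormedAddCommGroup E] [InnerProductSpace ℝ E] [CompleteSpace E]
    {g : E → ℝ} (hg : ContDiff ℝ 2 g) (z v : E)
    (h : ∀ w, 2 * g z ≤ g (z + w) + g (z - w)) :
    0 ≤ ⟪v, (fderiv ℝ (fun z => gradient g z) z) v⟫ := by
  have hgd : Differentiable ℝ g := hg.differentiable (by norm_num)
  have hgr : Differentiable ℝ (fun z => gradient g z) := by
    have h1 : Differentiable ℝ (fderiv ℝ g) :=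
      (hg.fderiv_right (m := 1) (by norm_num)).differentiable (by norm_num)
    exact (InnerProductSpace.toDual ℝ E).symm.toContinuousLinearEquiv.differentiable.comp h1
  set p : ℝ → ℝ := fun r => g (z + r • v) + g (z - r • v) with hp
  have hl1 : ∀ r : ℝ, HasDerivAt (fun r : ℝ => z + r • v) v r := fun r => by
    simpa using ((hasDerivAt_id r).smul_const v).const_add z
  have hl2 : ∀ r : ℝ, HasDerivAt (fun r : ℝ => z - r • v) (-v) r := fun r => by
    simpa using ((hasDerivAt_id r).smul_const v).const_sub z
  have hgD : ∀ z w, fderiv ℝ g z w = ⟪gradient g z, w⟫ := by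
    intro z w
    simp [gradient]
  have hp' : ∀ r, HasDerivAt p (⟪gradient g (z + r • v), v⟫ - ⟪gradient g (z - r • v), v⟫) r := by
    intro r
    have h1 := (hgd (z + r • v)).hasFDerivAt.comp_hasDerivAt r (hl1 r)
    have h2 := (hgd (z - r • v)).hasFDerivAt.comp_hasDerivAt r (hl2 r)
    have := h1.add h2
    rw [hgD, hgD, inner_neg_right, ← sub_eq_add_neg] at this
    exact this
  have hdp : deriv p = fun r => ⟪gradient g (z + r • v), v⟫ - ⟪gradient g (z - r • v), v⟫ :=
    funext fun r => (hp' r).deriv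
  set D := fderiv ℝ (fun z => gradient g z) z with hD
  have hp'' : HasDerivAt (deriv p) (2 * ⟪v, D v⟫) 0 := by
    rw [hdp]
    have e1 : HasFDerivAt (fun z => gradient g z) D (z + (0 : ℝ) • v) := by
      simpa using (hgr z).hasFDerivAt
    have e2 : HasFDerivAt (fun z => gradient g z) D (z - (0 : ℝ) • v) := by
      simpa using (hgr z).hasFDerivAt
    have h1 := e1.comp_hasDerivAt (0 : ℝ) (hl1 0)
    have h2 := e2.comp_hasDerivAt (0 : ℝ) (hl2 0)
    have h3 := (h1.inner ℝ (hasDerivAt_const (0 : ℝ) v)).sub (h2.inner ℝ (hasDerivAt_const (0 : ℝ) v))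
    refine h3.congr_deriv ?_
    have e3 : ⟪D v, v⟫ = ⟪v, D v⟫ := real_inner_comm _ _
    simp [e3]
    ring
  by_contra hneg
  push Not at hneg
  have hmax : IsLocalMax p 0 := by
    apply isLocalMax_of_deriv_deriv_neg
    · rw [hp''.deriv]; linarith
    · rw [hdp]; simp
    · exact (hp' 0).continuousAt
  have hconst : p =ᶠ[𝓝 0] fun _ => p 0 := by
    filter_upwards [hmax] with r hr
    refine le_antisymm hr ?_
    have := h (r • v)
    simp only [hp, zero_smul, add_zero, sub_zero]
    linarith
  have h5 : deriv p =ᶠ[𝓝 0] deriv (fun _ => p 0) := hconst.deriv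
  have h6 := h5.deriv_eq
  rw [hp''.deriv] at h6
  simp at h6
  linarith


lemma ker_ii (a t α : ℝ) (hα0 : 0 < α) :
    IntervalIntegrable (fun s => (t - s) ^ (α - 1) / Real.Gamma α) volume a t := by
  have h : IntervalIntegrable (fun s : ℝ => s ^ (α - 1)) volume (t - a) (t - t) :=
    intervalIntegral.intervalIntegrable_rpow' (by linarith)
  have h2 := h.comp_sub_left t
  simp only [sub_sub_cancel] at h2
  exact h2.div_const _

lemma ker_integral (a t α : ℝ) (hα0 : 0 < α) :
    ∫ s in a..t, (t - s) ^ (α - 1) / Real.Gamma α = (t - a) ^ α / α / Real.Gamma α := by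
  rw [intervalIntegral.integral_div]
  rw [intervalIntegral.integral_comp_sub_left (fun s => s ^ (α - 1)) t]
  rw [integral_rpow (Or.inl (by linarith))]
  simp [hα0.ne']

lemma ker_nonneg {t s α : ℝ} (hα0 : 0 < α) (h : s ≤ t) :
    0 ≤ (t - s) ^ (α - 1) / Real.Gamma α :=
  div_nonneg (Real.rpow_nonneg (by linarith) _) (Real.Gamma_pos_of_pos hα0).le

section
variable {n : ℕ}

lemma ker_smul_int {a b t α C : ℝ} (hα0 : 0 < α) (hat : a ≤ t) (htb : t ≤ b)
    {u : ℝ → EuclideanSpace ℝ (Fin n)} (hu : Measurable u)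
    (hC : ∀ᵐ s ∂(volume : Measure ℝ), s ∈ Icc a b → ‖u s‖ ≤ C) :
    IntervalIntegrable (fun s => ((t - s) ^ (α - 1) / Real.Gamma α) • u s) volume a t := by
  have h := ker_ii a t α hα0
  rw [intervalIntegrable_iff_integrableOn_Ioc_of_le hat] at h ⊢
  refine Integrable.mono' (g := fun s => ((t - s) ^ (α - 1) / Real.Gamma α) * C) (h.mul_const C) ?_ ?_
  · exact h.1.smul hu.aestronglyMeasurable
  · rw [ae_restrict_iff' measurableSet_Ioc]
    filter_upwards [hC] with s hs hs2
    rw [norm_smul, Real.norm_of_nonneg (ker_nonneg hα0 hs2.2)]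
    exact mul_le_mul_of_nonneg_left (hs ⟨hs2.1.le, hs2.2.trans htb⟩) (ker_nonneg hα0 hs2.2)

lemma traj_bound {a b t α C : ℝ} (hα0 : 0 < α) (hat : a ≤ t) (htb : t ≤ b) (hC0 : 0 ≤ C)
    {u : ℝ → EuclideanSpace ℝ (Fin n)} (y : EuclideanSpace ℝ (Fin n))
    (hC : ∀ᵐ s ∂(volume : Measure ℝ), s ∈ Icc a b → ‖u s‖ ≤ C) :
    ‖traj n a α u y t‖ ≤ ‖y‖ + (b - a) ^ α / α / Real.Gamma α * C := by
  unfold traj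
  refine (norm_add_le _ _).trans (add_le_add le_rfl ?_)
  have h1 : ‖∫ s in a..t, ((t - s) ^ (α - 1) / Real.Gamma α) • u s‖ ≤
      ∫ s in a..t, ((t - s) ^ (α - 1) / Real.Gamma α) * C := by
    refine intervalIntegral.norm_integral_le_of_norm_le hat ?_ ((ker_ii a t α hα0).mul_const C)
    filter_upwards [hC] with s hs hs2
    rw [norm_smul, Real.norm_of_nonneg (ker_nonneg hα0 hs2.2)]
    exact mul_le_mul_of_nonneg_left (hs ⟨hs2.1.le, hs2.2.trans htb⟩) (ker_nonneg hα0 hs2.2)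
  rw [intervalIntegral.integral_mul_const, ker_integral a t α hα0] at h1
  refine h1.trans ?_
  have := Real.Gamma_pos_of_pos hα0
  have : (t - a) ^ α ≤ (b - a) ^ α := Real.rpow_le_rpow (by linarith) (by linarith) hα0.le
  gcongr

lemma traj_meas {a b α : ℝ} {u : ℝ → EuclideanSpace ℝ (Fin n)} (y : EuclideanSpace ℝ (Fin n))
    (hu : Measurable u) :
    AEStronglyMeasurable (traj n a α u y) (volume.restrict (Ioc a b)) := by
  set F : ℝ × ℝ → EuclideanSpace ℝ (Fin n) :=
    {p : ℝ × ℝ | a < p.2 ∧ p.2 ≤ p.1}.indicator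
      (fun p => ((p.1 - p.2) ^ (α - 1) / Real.Gamma α) • u p.2) with hF
  have hFm : Measurable F := by
    refine Measurable.indicator ?_ ?_
    · have : Measurable (fun p : ℝ × ℝ => (p.1 - p.2) ^ (α - 1)) :=
        (measurable_fst.sub measurable_snd).pow_const _
      exact (this.div_const _).smul (hu.comp measurable_snd)
    · exact (measurableSet_lt measurable_const measurable_snd).inter
        (measurableSet_le measurable_snd measurable_fst)
  have h1 : StronglyMeasurable (fun t => y + ∫ s, F (t, s)) :=
    stronglyMeasurable_const.add (hFm.stronglyMeasurable.integral_prod_right' (ν := volume))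
  refine h1.aestronglyMeasurable.congr ?_
  rw [Filter.EventuallyEq, ae_restrict_iff' measurableSet_Ioc]
  refine Eventually.of_forall fun t ht => ?_
  unfold traj
  rw [intervalIntegral.integral_of_le ht.1.le, ← integral_indicator measurableSet_Ioc]
  congr 1

lemma traj_pert {a b t α C : ℝ} (hα0 : 0 < α) (hat : a ≤ t) (htb : t ≤ b)
    {u : ℝ → EuclideanSpace ℝ (Fin n)} (y v : EuclideanSpace ℝ (Fin n)) (hu : Measurable u)
    (hC : ∀ᵐ s ∂(volume : Measure ℝ), s ∈ Icc a b → ‖u s‖ ≤ C)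
    {c : ℝ → ℝ} (hc : Measurable c) (hc1 : ∀ s, ‖c s‖ ≤ 1) :
    traj n a α (fun s => u s + c s • v) y t = traj n a α u y t +
      (∫ s in Ioc a t, c s * ((t - s) ^ (α - 1) / Real.Gamma α)) • v := by
  unfold traj
  have h1 := ker_smul_int hα0 hat htb hu hC
  have h2 := ker_ii a t α hα0
  rw [intervalIntegrable_iff_integrableOn_Ioc_of_le hat] at h1 h2
  have h3 : IntegrableOn (fun s => c s * ((t - s) ^ (α - 1) / Real.Gamma α)) (Ioc a t) :=
    h2.bdd_mul hc.aestronglyMeasurable (Eventually.of_forall hc1)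
  rw [intervalIntegral.integral_of_le hat, intervalIntegral.integral_of_le hat,
    ← integral_smul_const, add_assoc, ← integral_add h1 (h3.smul_const v)]
  congr 2
  ext1 s
  rw [smul_add, smul_smul, mul_comm (c s)]

lemma dom_facts {a b β R C : ℝ} (hab : a ≤ b) (hβ : 0 < β)
    {L : EuclideanSpace ℝ (Fin n) × EuclideanSpace ℝ (Fin n) × ℝ → ℝ} (hL : Continuous L) :
    ∃ g : ℝ → ℝ, IntegrableOn g (Ioc a b) ∧
      ∀ (X : ℝ → EuclideanSpace ℝ (Fin n)) (q : ℝ → EuclideanSpace ℝ (Fin n)),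
      AEStronglyMeasurable X (volume.restrict (Ioc a b)) → Measurable q →
      (∀ t ∈ Ioc a b, ‖X t‖ ≤ R) →
      (∀ᵐ s ∂(volume : Measure ℝ), s ∈ Icc a b → ‖q s‖ ≤ C) →
      AEStronglyMeasurable (fun s => ((b - s) ^ (β - 1) / Real.Gamma β) * L (X s, q s, s))
        (volume.restrict (Ioc a b)) ∧
      ∀ᵐ s ∂(volume.restrict (Ioc a b)),
        ‖((b - s) ^ (β - 1) / Real.Gamma β) * L (X s, q s, s)‖ ≤ g s := by
  have hK : IsCompact ((Metric.closedBall (0 : EuclideanSpace ℝ (Fin n)) R) ×ˢ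
    ((Metric.closedBall (0 : EuclideanSpace ℝ (Fin n)) C) ×ˢ (Icc a b))) :=
    (isCompact_closedBall _ _).prod ((isCompact_closedBall _ _).prod isCompact_Icc)
  obtain ⟨M, hM⟩ := hK.exists_bound_of_continuousOn hL.continuousOn
  have hw := ker_ii a b β hβ
  rw [intervalIntegrable_iff_integrableOn_Ioc_of_le hab] at hw
  refine ⟨fun s => ((b - s) ^ (β - 1) / Real.Gamma β) * M, hw.mul_const M, ?_⟩
  intro X q hX hq hXb hqb
  refine ⟨?_, ?_⟩
  · refine hw.1.mul (hL.comp_aestronglyMeasurable (hX.prodMk ?_))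
    exact hq.aestronglyMeasurable.prodMk measurable_id.aestronglyMeasurable
  · rw [ae_restrict_iff' measurableSet_Ioc]
    filter_upwards [hqb] with s hs hs2
    rw [norm_mul, Real.norm_of_nonneg (ker_nonneg hβ hs2.2)]
    refine mul_le_mul_of_nonneg_left (hM _ ?_) (ker_nonneg hβ hs2.2)
    have := hs ⟨hs2.1.le, hs2.2⟩
    have := hXb s hs2
    simp only [mem_prod, Metric.mem_closedBall, dist_zero_right]
    exact ⟨this, hs ⟨hs2.1.le, hs2.2⟩, hs2.1.le, hs2.2⟩

lemma int_comb4 {μ : Measure ℝ} {f g h k : ℝ → ℝ} (hf : Integrable f μ) (hg : Integrable g μ)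
    (hh : Integrable h μ) (hk : Integrable k μ) :
    (∫ s, f s ∂μ) + (∫ s, g s ∂μ) + (∫ s, h s ∂μ) - (∫ s, k s ∂μ) =
      ∫ s, (f s + g s + h s - k s) ∂μ := by
  have h1 : Integrable (fun s => f s + g s) μ := hf.add hg
  have h2 : Integrable (fun s => f s + g s + h s) μ := h1.add hh
  rw [integral_sub h2 hk, integral_add h1 hh, integral_add hf hg]

lemma int_comb3 {μ : Measure ℝ} {f g k : ℝ → ℝ} (hf : Integrable f μ) (hg : Integrable g μ)
    (hk : Integrable k μ) :
    (∫ s, f s ∂μ) + (∫ s, g s ∂μ) - (∫ s, k s ∂μ) = ∫ s, (f s + g s - k s) ∂μ := by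
  have h1 : Integrable (fun s => f s + g s) μ := hf.add hg
  rw [integral_sub h1 hk, integral_add hf hg]

lemma avg_nonneg {a b α β : ℝ} (hab : a < b) (hα0 : 0 < α) (hβ : 0 < β)
    {φ : EuclideanSpace ℝ (Fin n) × EuclideanSpace ℝ (Fin n) → ℝ}
    {L : EuclideanSpace ℝ (Fin n) × EuclideanSpace ℝ (Fin n) × ℝ → ℝ}
    (hφ : Continuous φ) (hL : Continuous L)
    {u : ℝ → EuclideanSpace ℝ (Fin n)} {y : EuclideanSpace ℝ (Fin n)}
    (hadm : admissible n a b u)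
    (hmin : ∀ u' : ℝ → EuclideanSpace ℝ (Fin n), ∀ y' : EuclideanSpace ℝ (Fin n),
      admissible n a b u' → bolza n a b α β φ L u y ≤ bolza n a b α β φ L u' y')
    (v : EuclideanSpace ℝ (Fin n)) :
    ∀ᵐ t ∂(volume.restrict (Ioc a b)), 0 ≤
      ((b - t) ^ (β - 1) / Real.Gamma β) * L (traj n a α u y t, u t + v, t) +
      ((b - t) ^ (β - 1) / Real.Gamma β) * L (traj n a α u y t, u t + -v, t) -
      2 * (((b - t) ^ (β - 1) / Real.Gamma β) * L (traj n a α u y t, u t, t)) := by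
  obtain ⟨hu, C₀, hC₀⟩ := hadm
  set C := max C₀ 0 with hCdef
  have hC0 : 0 ≤ C := le_max_right _ _
  have hC : ∀ᵐ s ∂(volume : Measure ℝ), s ∈ Icc a b → ‖u s‖ ≤ C := by
    filter_upwards [hC₀] with s h h2 using (h h2).trans (le_max_left _ _)
  -- bound on perturbed controls
  have hpert : ∀ c : ℝ → ℝ, (∀ s, ‖c s‖ ≤ 1) →
      ∀ᵐ s ∂(volume : Measure ℝ), s ∈ Icc a b → ‖u s + c s • v‖ ≤ C + ‖v‖ := by
    intro c hc
    filter_upwards [hC] with s h h2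
    refine (norm_add_le _ _).trans (add_le_add (h h2) ?_)
    rw [norm_smul]
    have := mul_le_mul_of_nonneg_right (hc s) (norm_nonneg v)
    linarith
  have hC1 : 0 ≤ C + ‖v‖ := by positivity
  set R := ‖y‖ + (b - a) ^ α / α / Real.Gamma α * (C + ‖v‖) with hR
  obtain ⟨g, hg, hdom⟩ := dom_facts (n := n) (R := R) (C := C + ‖v‖) hab.le hβ hL
  set w : ℝ → ℝ := fun s => (b - s) ^ (β - 1) / Real.Gamma β with hw
  set x := traj n a α u y with hx
  have hpertm : ∀ c : ℝ → ℝ, Measurable c → Measurable (fun s => u s + c s • v) := by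
    intro c hc
    exact hu.add (hc.smul_const v)
  -- general facts
  have hgen : ∀ c d : ℝ → ℝ, Measurable c → Measurable d → (∀ s, ‖c s‖ ≤ 1) → (∀ s, ‖d s‖ ≤ 1) →
      AEStronglyMeasurable (fun s => w s * L (traj n a α (fun s => u s + c s • v) y s,
        u s + d s • v, s)) (volume.restrict (Ioc a b)) ∧
      ∀ᵐ s ∂(volume.restrict (Ioc a b)),
        ‖w s * L (traj n a α (fun s => u s + c s • v) y s, u s + d s • v, s)‖ ≤ g s := by
    intro c d hc hd hc1 hd1
    refine hdom _ _ (traj_meas y (hpertm c hc)) (hpertm d hd) ?_ (hpert d hd1)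
    intro t ht
    exact traj_bound hα0 ht.1.le ht.2 hC1 y (hpert c hc1)
  have hz : (fun s => u s + (fun _ => (0 : ℝ)) s • v) = u := by ext1 s; simp
  have hgen0 : ∀ d : ℝ → ℝ, Measurable d → (∀ s, ‖d s‖ ≤ 1) →
      IntegrableOn (fun s => w s * L (x s, u s + d s • v, s)) (Ioc a b) := by
    intro d hd hd1
    have h := hgen (fun _ => 0) d measurable_const hd (by simp) hd1
    rw [hz] at h
    exact hg.mono' h.1 h.2
  have i1 : IntegrableOn (fun s => w s * L (x s, u s + v, s)) (Ioc a b) := by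
    simpa using hgen0 (fun _ => 1) measurable_const (by simp)
  have i2 : IntegrableOn (fun s => w s * L (x s, u s + -v, s)) (Ioc a b) := by
    simpa using hgen0 (fun _ => -1) measurable_const (by simp)
  have i0 : IntegrableOn (fun s => w s * L (x s, u s, s)) (Ioc a b) := by
    simpa using hgen0 (fun _ => 0) measurable_const (by simp)
  refine ae_nonneg_of_forall_setIntegral_nonneg ((i1.add i2).sub (i0.const_mul 2)) ?_
  intro E hE _
  set e : ℝ → ℝ := E.indicator (fun _ => 1) with he
  have hem : Measurable e := measurable_const.indicator hE
  have he01 : ∀ s, e s = 0 ∨ e s = 1 := by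
    intro s; by_cases h : s ∈ E <;> simp [he, h]
  have he1 : ∀ s, ‖e s‖ ≤ 1 := by
    intro s; rcases he01 s with h | h <;> simp [h]
  set c : ℕ → ℝ → ℝ := fun k s => radem k s * e s with hc
  have hcm : ∀ k, Measurable (c k) := fun k => (radem_meas k).mul hem
  have hc1 : ∀ k s, ‖c k s‖ ≤ 1 := by
    intro k s
    rw [hc]; simp only [norm_mul]
    exact mul_le_one₀ (radem_abs k s) (norm_nonneg _) (he1 s)
  set X : ℕ → ℝ → EuclideanSpace ℝ (Fin n) := fun k => traj n a α (fun s => u s + c k s • v) y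
    with hX
  have hXlim : ∀ t ∈ Ioc a b, Tendsto (fun k => X k t) atTop (𝓝 (x t)) := by
    intro t ht
    have h2 := ker_ii a t α hα0
    rw [intervalIntegrable_iff_integrableOn_Ioc_of_le ht.1.le] at h2
    have h3 : IntegrableOn (fun s => e s * ((t - s) ^ (α - 1) / Real.Gamma α)) (Ioc a t) :=
      h2.bdd_mul hem.aestronglyMeasurable (Eventually.of_forall he1)
    have h4 := radem_L1_on measurableSet_Ioc h3
    have h5 := (h4.smul_const v).const_add (x t)
    rw [zero_smul, add_zero] at h5
    refine h5.congr fun k => ?_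
    simp only [hX]
    rw [traj_pert hα0 ht.1.le ht.2 y v hu hC (hcm k) (hc1 k)]
    simp only [hc, mul_assoc, hx]
  have hconv : ∀ d : ℝ → ℝ, Measurable d → (∀ s, ‖d s‖ ≤ 1) →
      Tendsto (fun k => ∫ s in Ioc a b, w s * L (X k s, u s + d s • v, s)) atTop
        (𝓝 (∫ s in Ioc a b, w s * L (x s, u s + d s • v, s))) ∧
      Tendsto (fun k => ∫ s in Ioc a b, radem k s * (w s * L (X k s, u s + d s • v, s))) atTop
        (𝓝 0) := by
    intro d hd hd1
    have hl : ∀ᵐ s ∂(volume.restrict (Ioc a b)),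
        Tendsto (fun k => w s * L (X k s, u s + d s • v, s)) atTop
          (𝓝 (w s * L (x s, u s + d s • v, s))) := by
      rw [ae_restrict_iff' measurableSet_Ioc]
      refine Eventually.of_forall fun s hs => ?_
      refine Tendsto.const_mul _ ?_
      exact (hL.tendsto _).comp ((hXlim s hs).prodMk_nhds tendsto_const_nhds)
    have hF := fun k => (hgen (c k) d (hcm k) hd (hc1 k) hd1).1
    have hB := fun k => (hgen (c k) d (hcm k) hd (hc1 k) hd1).2
    exact ⟨tendsto_integral_of_dominated_convergence g hF hg hB hl,
      radem_dom measurableSet_Ioc hF hg hB hl⟩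
  have hnem : Measurable (fun s => -e s) := hem.neg
  have hne1 : ∀ s, ‖-e s‖ ≤ 1 := by simpa using he1
  obtain ⟨p1, p2⟩ := hconv e hem he1
  obtain ⟨m1, m2⟩ := hconv (fun s => -e s) hnem hne1
  -- bolza of the perturbation
  have hbol : ∀ k, bolza n a b α β φ L (fun s => u s + c k s • v) y = φ (y, X k b) +
      (1 / 2) * ((∫ s in Ioc a b, w s * L (X k s, u s + e s • v, s)) +
       (∫ s in Ioc a b, w s * L (X k s, u s + (-e s) • v, s)) +
       (∫ s in Ioc a b, radem k s * (w s * L (X k s, u s + e s • v, s))) -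
       (∫ s in Ioc a b, radem k s * (w s * L (X k s, u s + (-e s) • v, s)))) := by
    intro k
    have j1 : IntegrableOn (fun s => w s * L (X k s, u s + e s • v, s)) (Ioc a b) :=
      hg.mono' (hgen (c k) e (hcm k) hem (hc1 k) he1).1 (hgen (c k) e (hcm k) hem (hc1 k) he1).2
    have j2 : IntegrableOn (fun s => w s * L (X k s, u s + (-e s) • v, s)) (Ioc a b) :=
      hg.mono' (hgen (c k) _ (hcm k) hnem (hc1 k) hne1).1
        (hgen (c k) _ (hcm k) hnem (hc1 k) hne1).2
    have j3 := radem_mul_int k j1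
    have j4 := radem_mul_int k j2
    unfold bolza
    rw [intervalIntegral.integral_of_le hab.le]
    rw [int_comb4 j1 j2 j3 j4, ← integral_const_mul]
    congr 2
    ext1 s
    simp only [hX, hc, hw]
    rcases radem_cases k s with h | h <;> simp only [h, one_mul, neg_mul, neg_smul] <;> ring
  have hlim : Tendsto (fun k => bolza n a b α β φ L (fun s => u s + c k s • v) y) atTop
      (𝓝 (φ (y, x b) + (1 / 2) * ((∫ s in Ioc a b, w s * L (x s, u s + e s • v, s)) +
       (∫ s in Ioc a b, w s * L (x s, u s + (-e s) • v, s)) + 0 - 0))) := by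
    simp only [hbol]
    refine Tendsto.add ?_ ((((p1.add m1).add p2).sub m2).const_mul _)
    exact (hφ.tendsto _).comp (tendsto_const_nhds.prodMk_nhds (hXlim b ⟨hab, le_rfl⟩))
  have hge := ge_of_tendsto' hlim (fun k => hmin _ y ⟨hpertm _ (hcm k), _, hpert _ (hc1 k)⟩)
  have hb0 : bolza n a b α β φ L u y = φ (y, x b) + ∫ s in Ioc a b, w s * L (x s, u s, s) := by
    unfold bolza
    rw [intervalIntegral.integral_of_le hab.le]
  rw [hb0] at hge
  have k1 := hgen0 e hem he1
  have k2 := hgen0 _ hnem hne1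
  have hfin : ∫ s in E, (w s * L (x s, u s + v, s) + w s * L (x s, u s + -v, s)
        - 2 * (w s * L (x s, u s, s))) ∂(volume.restrict (Ioc a b)) =
      (∫ s in Ioc a b, w s * L (x s, u s + e s • v, s)) +
       (∫ s in Ioc a b, w s * L (x s, u s + (-e s) • v, s)) -
       2 * ∫ s in Ioc a b, w s * L (x s, u s, s) := by
    rw [← integral_indicator hE, ← integral_const_mul, int_comb3 k1 k2 (i0.const_mul 2)]
    congr 1
    ext1 s
    by_cases h : s ∈ E
    · simp [he, h]
    · simp [he, h]; ring
  have hfin2 : 0 ≤ ∫ s in E, (w s * L (x s, u s + v, s) + w s * L (x s, u s + -v, s)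
        - 2 * (w s * L (x s, u s, s))) ∂(volume.restrict (Ioc a b)) := by
    rw [hfin]; linarith
  exact hfin2


end

theorem stmt_8 (n : ℕ) (hn : 1 ≤ n) (a b : ℝ) (hab : a < b)
    (α β : ℝ) (hα0 : 0 < α) (hα1 : α ≤ 1) (hβ : 0 < β)
    (φ : EuclideanSpace ℝ (Fin n) × EuclideanSpace ℝ (Fin n) → ℝ)
    (L : EuclideanSpace ℝ (Fin n) × EuclideanSpace ℝ (Fin n) × ℝ → ℝ)
    (hφ : ContDiff ℝ 2 φ) (hL : ContDiff ℝ 2 L)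
    (u : ℝ → EuclideanSpace ℝ (Fin n)) (y : EuclideanSpace ℝ (Fin n))
    (hadm : admissible n a b u)
    (hmin : ∀ u' : ℝ → EuclideanSpace ℝ (Fin n), ∀ y' : EuclideanSpace ℝ (Fin n),
      admissible n a b u' → bolza n a b α β φ L u y ≤ bolza n a b α β φ L u' y') :
    ∀ᵐ t ∂(volume.restrict (Icc a b)), ∀ v : EuclideanSpace ℝ (Fin n),
      0 ≤ ((b - t) ^ (β - 1) / Real.Gamma β) *
        ⟪v, (fderiv ℝ (fun z => gradient (fun z' => L (traj n a α u y t, z', t)) z) (u t)) v⟫ := by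
  have hLc : Continuous L := hL.continuous
  have hbase : ∀ᵐ t ∂(volume.restrict (Ioc a b)), ∀ i : ℕ, 0 ≤
      ((b - t) ^ (β - 1) / Real.Gamma β) *
        L (traj n a α u y t, u t + TopologicalSpace.denseSeq (EuclideanSpace ℝ (Fin n)) i, t) +
      ((b - t) ^ (β - 1) / Real.Gamma β) *
        L (traj n a α u y t, u t + -TopologicalSpace.denseSeq (EuclideanSpace ℝ (Fin n)) i, t) -
      2 * (((b - t) ^ (β - 1) / Real.Gamma β) * L (traj n a α u y t, u t, t)) :=
    ae_all_iff.2 fun i => avg_nonneg hab hα0 hβ hφ.continuous hLc hadm hmin _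
  rw [Measure.restrict_congr_set (Ioo_ae_eq_Icc (μ := volume) (a := a) (b := b)).symm]
  rw [Measure.restrict_congr_set (Ioo_ae_eq_Ioc (μ := volume) (a := a) (b := b)).symm] at hbase
  filter_upwards [hbase, ae_restrict_mem measurableSet_Ioo] with t ht htI v
  have hw : 0 < (b - t) ^ (β - 1) / Real.Gamma β :=
    div_pos (Real.rpow_pos_of_pos (by linarith [htI.2]) _) (Real.Gamma_pos_of_pos hβ)
  refine mul_nonneg hw.le ?_
  refine second_diff (g := fun z' => L (traj n a α u y t, z', t)) ?_ (u t) v ?_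
  · exact hL.comp (contDiff_const.prodMk (contDiff_id.prodMk contDiff_const))
  · intro z
    have hcl : IsClosed {z : EuclideanSpace ℝ (Fin n) | 2 * L (traj n a α u y t, u t, t) ≤
        L (traj n a α u y t, u t + z, t) + L (traj n a α u y t, u t - z, t)} :=
      isClosed_le (by fun_prop) (by fun_prop)
    have hsub : range (TopologicalSpace.denseSeq (EuclideanSpace ℝ (Fin n))) ⊆
        {z : EuclideanSpace ℝ (Fin n) | 2 * L (traj n a α u y t, u t, t) ≤
        L (traj n a α u y t, u t + z, t) + L (traj n a α u y t, u t - z, t)} := by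
      rintro _ ⟨i, rfl⟩
      have h1 := ht i
      simp only [mem_ofPred_eq]
      rw [← sub_eq_add_neg] at h1
      by_contra hcon
      push Not at hcon
      have := mul_lt_mul_of_pos_left hcon hw
      rw [mul_add] at this
      linarith
    exact hcl.closure_subset_iff.2 hsub
      ((TopologicalSpace.denseRange_denseSeq (EuclideanSpace ℝ (Fin n))).closure_range ▸ mem_univ z)
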